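/- arXiv:2508.14789 — 4 statements merged into one kernel-verified Lean document; each statement's English description precedes it below -/
import Mathlib

section
/- For real numbers μ₀, μ₁ and σ₀, σ₁ > 0, the Wasserstein-2 distance between the Gaussian measures N(μ₁, σ₁²) and N(μ₀, σ₀²) on ℝ equals sqrt((μ₁ − μ₀)² + (σ₁ − σ₀)²). -/
open MeasureTheory ProbabilityTheory
open scoped ENNReal NNReal

/-- The Wasserstein-`p` distance between two measures on `ℝ`:
the infimum over all couplings `γ` (probability measures on `ℝ × ℝ` with first marginal `μ`
and second marginal `ν`) of `∫ |x₁ - x₂|^p dγ`, raised to the power `1/p`. -/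
noncomputable def wassersteinDist (p : ℝ) (μ ν : Measure ℝ) : ℝ≥0∞ :=
  (⨅ (γ : Measure (ℝ × ℝ)) (_ : IsProbabilityMeasure γ)
      (_ : γ.map Prod.fst = μ) (_ : γ.map Prod.snd = ν),
    ∫⁻ x, ENNReal.ofReal (|x.1 - x.2| ^ p) ∂γ) ^ (1 / p)

/-!
For square-integrable `X` and `Y`,
`𝔼 (X - Y)² = (𝔼 X - 𝔼 Y)² + (√Var X - √Var Y)² + 2 (√Var X √Var Y - cov(X, Y))`.
The first two terms depend only on the laws of `X` and `Y`, and by Cauchy–Schwarz the last one is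
nonnegative, so the optimal couplings are the perfectly correlated ones whenever these exist. For
two Gaussian laws, increasing affine images of a single standard Gaussian form such a coupling.
-/

section Covariance

variable {Ω : Type*} {mΩ : MeasurableSpace Ω} {P : Measure Ω} {X Y : Ω → ℝ}

lemma sq_covariance_le_variance_mul_variance [IsFiniteMeasure P] (hX : MemLp X 2 P)
    (hY : MemLp Y 2 P) : cov[X, Y; P] ^ 2 ≤ Var[X; P] * Var[Y; P] := by
  have hquad (c : ℝ) : 0 ≤ Var[X; P] * (c * c) + -2 * cov[X, Y; P] * c + Var[Y; P] :=
    calc 0 ≤ Var[c • X - Y; P] := variance_nonneg _ _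
      _ = Var[X; P] * (c * c) + -2 * cov[X, Y; P] * c + Var[Y; P] := by
        rw [variance_sub (hX.const_smul c) hY, variance_smul, covariance_smul_left]
        ring
  have hdiscrim := discrim_le_zero hquad
  rw [discrim] at hdiscrim
  linarith

lemma covariance_le_sqrt_variance_mul_sqrt_variance [IsFiniteMeasure P] (hX : MemLp X 2 P)
    (hY : MemLp Y 2 P) : cov[X, Y; P] ≤ √Var[X; P] * √Var[Y; P] := by
  rw [← Real.sqrt_mul (variance_nonneg X P)]
  exact Real.le_sqrt_of_sq_le (sq_covariance_le_variance_mul_variance hX hY)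

lemma integral_sub_sq_eq [IsProbabilityMeasure P] (hX : MemLp X 2 P)
    (hY : MemLp Y 2 P) :
    ∫ ω, (X ω - Y ω) ^ 2 ∂P = (P[X] - P[Y]) ^ 2 + (√Var[X; P] - √Var[Y; P]) ^ 2 +
      2 * (√Var[X; P] * √Var[Y; P] - cov[X, Y; P]) := by
  have hmean : P[X - Y] = P[X] - P[Y] :=
    integral_sub (hX.integrable one_le_two) (hY.integrable one_le_two)
  have hvar : Var[X; P] - 2 * cov[X, Y; P] + Var[Y; P] =
      (∫ ω, (X ω - Y ω) ^ 2 ∂P) - (P[X] - P[Y]) ^ 2 := by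
    rw [← variance_sub hX hY, variance_eq_sub (hX.sub hY), hmean]
    rfl
  have hsX := Real.sq_sqrt (variance_nonneg X P)
  have hsY := Real.sq_sqrt (variance_nonneg Y P)
  linarith

lemma lintegral_abs_sub_rpow_two (hX : MemLp X 2 P) (hY : MemLp Y 2 P) :
    ∫⁻ ω, ENNReal.ofReal (|X ω - Y ω| ^ (2 : ℝ)) ∂P =
      ENNReal.ofReal (∫ ω, (X ω - Y ω) ^ 2 ∂P) := by
  simp only [Real.rpow_ofNat, sq_abs]
  exact (ofReal_integral_eq_lintegral_ofReal (hX.sub hY).integrable_sq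
    (ae_of_all _ fun _ ↦ sq_nonneg _)).symm

end Covariance

lemma ofReal_rpow_one_half_eq_ofReal_sqrt {x : ℝ} (hx : 0 ≤ x) :
    ENNReal.ofReal x ^ (1 / 2 : ℝ) = ENNReal.ofReal (√x) := by
  rw [ENNReal.ofReal_rpow_of_nonneg hx (by norm_num), Real.sqrt_eq_rpow]

section Wasserstein

variable {μ ν : Measure ℝ} {p : ℝ}

lemma le_wassersteinDist (hp : 0 ≤ p) {c : ℝ≥0∞}
    (h : ∀ γ : Measure (ℝ × ℝ), IsProbabilityMeasure γ → γ.map Prod.fst = μ →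
      γ.map Prod.snd = ν → c ≤ ∫⁻ x, ENNReal.ofReal (|x.1 - x.2| ^ p) ∂γ) :
    c ^ (1 / p) ≤ wassersteinDist p μ ν :=
  ENNReal.rpow_le_rpow (le_iInf fun γ ↦ le_iInf fun hγ ↦ le_iInf fun h₁ ↦ le_iInf fun h₂ ↦
    h γ hγ h₁ h₂) (by positivity)

lemma wassersteinDist_map_le {Ω : Type*} {mΩ : MeasurableSpace Ω} {P : Measure Ω}
    [IsProbabilityMeasure P] {X Y : Ω → ℝ} (hX : AEMeasurable X P) (hY : AEMeasurable Y P)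
    (hp : 0 ≤ p) :
    wassersteinDist p (P.map X) (P.map Y) ≤
      (∫⁻ ω, ENNReal.ofReal (|X ω - Y ω| ^ p) ∂P) ^ (1 / p) := by
  have hXY : AEMeasurable (fun ω ↦ (X ω, Y ω)) P := hX.prodMk hY
  refine ENNReal.rpow_le_rpow ?_ (by positivity)
  refine iInf₂_le_of_le (P.map fun ω ↦ (X ω, Y ω)) (Measure.isProbabilityMeasure_map hXY) <|
    iInf₂_le_of_le ?fst ?snd (le_of_eq ?cost)
  case fst => exact AEMeasurable.map_map_of_aemeasurable (by fun_prop) hXY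
  case snd => exact AEMeasurable.map_map_of_aemeasurable (by fun_prop) hXY
  case cost => exact lintegral_map' (by fun_prop) hXY

/-- Gelbrich's lower bound. -/
lemma ofReal_sqrt_le_wassersteinDist_two (hμ : MemLp id 2 μ) (hν : MemLp id 2 ν) :
    ENNReal.ofReal (√((μ[id] - ν[id]) ^ 2 + (√Var[id; μ] - √Var[id; ν]) ^ 2)) ≤
      wassersteinDist 2 μ ν := by
  rw [← ofReal_rpow_one_half_eq_ofReal_sqrt (by positivity)]
  refine le_wassersteinDist zero_le_two fun γ _ h₁ h₂ ↦ ?_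
  have hfst : HasLaw Prod.fst μ γ := ⟨by fun_prop, h₁⟩
  have hsnd : HasLaw Prod.snd ν γ := ⟨by fun_prop, h₂⟩
  have hfstL : MemLp Prod.fst 2 γ := (h₁ ▸ hμ).comp_of_map hfst.aemeasurable
  have hsndL : MemLp Prod.snd 2 γ := (h₂ ▸ hν).comp_of_map hsnd.aemeasurable
  rw [lintegral_abs_sub_rpow_two hfstL hsndL,
    integral_sub_sq_eq hfstL hsndL, hfst.variance_eq, hsnd.variance_eq,
    hfst.integral_eq, hsnd.integral_eq]
  have hcov := covariance_le_sqrt_variance_mul_sqrt_variance hfstL hsndL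
  rw [hfst.variance_eq, hsnd.variance_eq] at hcov
  exact ENNReal.ofReal_le_ofReal (le_add_of_nonneg_right (by linarith))

variable {Ω : Type*} {mΩ : MeasurableSpace Ω} {P : Measure Ω} [IsProbabilityMeasure P]

theorem wassersteinDist_two_map_of_covariance_eq {X Y : Ω → ℝ} (hX : MemLp X 2 P)
    (hY : MemLp Y 2 P) (hcov : cov[X, Y; P] = √Var[X; P] * √Var[Y; P]) :
    wassersteinDist 2 (P.map X) (P.map Y) =
      ENNReal.ofReal (√((P[X] - P[Y]) ^ 2 + (√Var[X; P] - √Var[Y; P]) ^ 2)) := by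
  refine le_antisymm ?upper ?lower
  case upper =>
    refine (wassersteinDist_map_le hX.aemeasurable hY.aemeasurable zero_le_two).trans_eq ?_
    rw [lintegral_abs_sub_rpow_two hX hY, integral_sub_sq_eq hX hY, hcov,
      sub_self, mul_zero, add_zero, ofReal_rpow_one_half_eq_ofReal_sqrt (by positivity)]
  case lower =>
    have hlaw {Z : Ω → ℝ} (hZ : MemLp Z 2 P) : HasLaw Z (P.map Z) P := ⟨hZ.aemeasurable, rfl⟩
    have hL {Z : Ω → ℝ} (hZ : MemLp Z 2 P) : MemLp id 2 (P.map Z) :=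
      (memLp_map_measure_iff aestronglyMeasurable_id hZ.aemeasurable).2 hZ
    rw [(hlaw hX).integral_eq, (hlaw hY).integral_eq, (hlaw hX).variance_eq, (hlaw hY).variance_eq]
    exact ofReal_sqrt_le_wassersteinDist_two (hL hX) (hL hY)

theorem wasserstein2_gaussian_general {Z : Ω → ℝ} (hZ : MemLp Z 2 P) (hmean : P[Z] = 0)
    (hvar : Var[Z; P] = 1) (μ₀ μ₁ : ℝ) {σ₀ σ₁ : ℝ} (hσ : 0 ≤ σ₁ * σ₀) :
    wassersteinDist 2 (P.map fun ω ↦ σ₁ * Z ω + μ₁) (P.map fun ω ↦ σ₀ * Z ω + μ₀) =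
      ENNReal.ofReal (√((μ₁ - μ₀) ^ 2 + (σ₁ - σ₀) ^ 2)) := by
  have hL (σ m : ℝ) : MemLp (fun ω ↦ σ * Z ω + m) 2 P := (hZ.const_mul σ).add (memLp_const m)
  have hZint : Integrable Z P := hZ.integrable one_le_two
  have hmean_affine (σ m : ℝ) : ∫ ω, σ * Z ω + m ∂P = m := by
    rw [integral_add (hZint.const_mul σ) (integrable_const m), integral_const_mul, hmean]
    simp
  have hsd_affine (σ m : ℝ) : √Var[fun ω ↦ σ * Z ω + m; P] = |σ| := by
    rw [variance_add_const (hZ.const_mul σ).aestronglyMeasurable, variance_const_mul, hvar,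
      mul_one, Real.sqrt_sq_eq_abs]
  have hcov : cov[fun ω ↦ σ₁ * Z ω + μ₁, fun ω ↦ σ₀ * Z ω + μ₀; P] = |σ₁| * |σ₀| := by
    rw [covariance_add_const_left (hZint.const_mul σ₁), covariance_add_const_right
      (hZint.const_mul σ₀), covariance_const_mul_left, covariance_const_mul_right,
      covariance_self hZ.aemeasurable, hvar, mul_one, ← abs_mul, abs_of_nonneg hσ]
  have habs : (|σ₁| - |σ₀|) ^ 2 = (σ₁ - σ₀) ^ 2 := by
    rw [sub_sq, sub_sq, sq_abs, sq_abs, mul_assoc, mul_assoc, ← abs_mul, abs_of_nonneg hσ]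
  rw [wassersteinDist_two_map_of_covariance_eq (hL σ₁ μ₁) (hL σ₀ μ₀)
    (by rw [hcov, hsd_affine, hsd_affine]), hmean_affine, hmean_affine,
    hsd_affine, hsd_affine, habs]

end Wasserstein

lemma gaussianReal_map_const_mul_add_const (m : ℝ) (v : ℝ≥0) (c d : ℝ) :
    (gaussianReal m v).map (fun x ↦ c * x + d) =
      gaussianReal (c * m + d) ((c ^ 2).toNNReal * v) := by
  rw [Real.toNNReal_of_nonneg (sq_nonneg c)]
  exact (gaussianReal_add_const (gaussianReal_const_mul HasLaw.id c) d).map_eq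

/-- For Gaussian measures on `ℝ`,
`W₂(N(μ₁, σ₁²), N(μ₀, σ₀²)) = sqrt((μ₁ - μ₀)² + (σ₁ - σ₀)²)`. -/
theorem wasserstein2_gaussian (μ₀ μ₁ σ₀ σ₁ : ℝ) (hσ₀ : 0 < σ₀) (hσ₁ : 0 < σ₁) :
    wassersteinDist 2 (gaussianReal μ₁ (σ₁ ^ 2).toNNReal) (gaussianReal μ₀ (σ₀ ^ 2).toNNReal) =
      ENNReal.ofReal (Real.sqrt ((μ₁ - μ₀) ^ 2 + (σ₁ - σ₀) ^ 2)) := by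
  have hlaw (m σ : ℝ) :
      gaussianReal m (σ ^ 2).toNNReal = (gaussianReal 0 1).map fun x ↦ σ * x + m := by
    simp [gaussianReal_map_const_mul_add_const]
  rw [hlaw, hlaw]
  exact wasserstein2_gaussian_general (memLp_id_gaussianReal 2) integral_id_gaussianReal
    (by simp) μ₀ μ₁ (mul_pos hσ₁ hσ₀).le
end

section
/- Let p ≥ 1 and let μ, ν be probability measures on ℝ with finite p-th moments, with cumulative distribution functions F and G. Then W_p(μ,ν)^p = ∫₀¹ |F⁻¹(t) − G⁻¹(t)|^p dt, where F⁻¹(t) = inf{x ∈ ℝ : F(x) ≥ t} and G⁻¹(t) = inf{x ∈ ℝ : G(x) ≥ t} are the generalized inverse (quantile) functions. -/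
open MeasureTheory ProbabilityTheory Filter
open scoped ENNReal NNReal

/-- The cumulative distribution function of a measure on `ℝ`. -/
noncomputable def cdfOf (μ : Measure ℝ) (x : ℝ) : ℝ := (μ (Set.Iic x)).toReal

/-- The generalized inverse (quantile function) of the cdf of `μ`:
`F⁻¹(t) = inf {x : F x ≥ t}`. -/
noncomputable def quantileOf (μ : Measure ℝ) (t : ℝ) : ℝ := sInf {x : ℝ | t ≤ cdfOf μ x}

/-! The quantile functions of `μ` and `ν`, evaluated at one uniform variable, form a coupling which,
among all couplings, puts the least mass `(F s - G t)⁺` on each quadrant `(-∞, s] × (t, ∞)`, where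
`F` and `G` are the two cdfs. Every cost `c x y = Q ([x, ∞) × (-∞, y))` is a superposition of
indicators of such quadrants, so this coupling minimizes its integral. The cost `((y - x)⁺) ^ p` is
of this form because its second derivative, taken as a Stieltjes measure so that `p = 1` is
included, is nonnegative; adding the cost with `x` and `y` exchanged gives `|x - y| ^ p`. -/

open Set

section Quantile

lemma isLeast_sInf_setOf_le_stieltjesFunction (F : StieltjesFunction ℝ) {u : ℝ}
    (hne : {x | u ≤ F x}.Nonempty) (hbdd : BddBelow {x | u ≤ F x}) :
    IsLeast {x | u ≤ F x} (sInf {x | u ≤ F x}) := by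
  refine ⟨?_, fun x hx => csInf_le hbdd hx⟩
  rw [mem_ofPred_eq, ← F.iInf_Ioi_eq]
  refine le_ciInf fun ⟨y, hy⟩ => ?_
  obtain ⟨z, hz, hzy⟩ := exists_lt_of_csInf_lt hne hy
  exact hz.trans (F.mono hzy.le)

lemma cdfOf_nonneg (μ : Measure ℝ) (x : ℝ) : 0 ≤ cdfOf μ x := measureReal_nonneg

lemma ofReal_cdfOf (μ : Measure ℝ) [IsFiniteMeasure μ] (x : ℝ) :
    ENNReal.ofReal (cdfOf μ x) = μ (Iic x) :=
  ENNReal.ofReal_toReal (measure_ne_top _ _)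

variable (μ : Measure ℝ) [IsProbabilityMeasure μ]

lemma cdfOf_eq_cdf : cdfOf μ = cdf μ :=
  funext fun x => (cdf_eq_real μ x).symm

lemma quantileOf_le_iff {u : ℝ} (hu : u ∈ Ioo (0 : ℝ) 1) (x : ℝ) :
    quantileOf μ u ≤ x ↔ u ≤ cdfOf μ x := by
  rw [quantileOf, cdfOf_eq_cdf]
  have hne : {x | u ≤ cdf μ x}.Nonempty :=
    ((tendsto_cdf_atTop μ).eventually (eventually_ge_nhds hu.2)).exists
  have hbdd : BddBelow {x | u ≤ cdf μ x} := by
    obtain ⟨b, hb⟩ := ((tendsto_cdf_atBot μ).eventually (eventually_lt_nhds hu.1)).exists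
    exact ⟨b, fun y hy => ((cdf μ).mono.reflect_lt (hb.trans_le hy)).le⟩
  have hleast := isLeast_sInf_setOf_le_stieltjesFunction (cdf μ) hne hbdd
  exact ⟨fun h => hleast.1.trans ((cdf μ).mono h), fun h => hleast.2 h⟩

lemma monotoneOn_quantileOf : MonotoneOn (quantileOf μ) (Ioo 0 1) := fun _ ha _ hb hab =>
  (quantileOf_le_iff μ ha _).2 (hab.trans ((quantileOf_le_iff μ hb _).1 le_rfl))

lemma aemeasurable_quantileOf :
    AEMeasurable (quantileOf μ) (volume.restrict (Ioo (0 : ℝ) 1)) :=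
  aemeasurable_restrict_of_monotoneOn measurableSet_Ioo (monotoneOn_quantileOf μ)

lemma map_quantileOf : (volume.restrict (Ioo (0 : ℝ) 1)).map (quantileOf μ) = μ := by
  refine Measure.ext_of_Iic _ _ fun x => ?_
  have hpre : quantileOf μ ⁻¹' Iic x ∩ Ioo 0 1 = Iic (cdfOf μ x) ∩ Ioo 0 1 := by
    ext u
    exact and_congr_left fun hu => quantileOf_le_iff μ hu x
  have hle : cdfOf μ x ≤ 1 := measureReal_le_one
  calc (volume.restrict (Ioo (0 : ℝ) 1)).map (quantileOf μ) (Iic x)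
      = volume (quantileOf μ ⁻¹' Iic x ∩ Ioo 0 1) := by
        rw [Measure.map_apply_of_aemeasurable (aemeasurable_quantileOf μ) measurableSet_Iic,
          Measure.restrict_apply' measurableSet_Ioo]
    _ = volume.restrict (Ioc (0 : ℝ) 1) (Iic (cdfOf μ x)) := by
        rw [hpre, ← Measure.restrict_apply' measurableSet_Ioo, restrict_Ioo_eq_restrict_Ioc]
    _ = μ (Iic x) := by
        rw [Measure.restrict_apply' measurableSet_Ioc, inter_comm, Ioc_inter_Iic, min_eq_right hle,
          Real.volume_Ioc, sub_zero, ofReal_cdfOf]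

end Quantile

section QuantileCoupling

/-- The comonotone coupling of `μ` and `ν`, i.e. the joint law of their quantile functions evaluated
at the same uniform variable on `(0, 1)`. The open interval avoids the junk values of `quantileOf`
at `0` and `1`. -/
noncomputable def quantileCoupling (μ ν : Measure ℝ) : Measure (ℝ × ℝ) :=
  (volume.restrict (Ioo (0 : ℝ) 1)).map fun u => (quantileOf μ u, quantileOf ν u)

variable (μ ν : Measure ℝ) [IsProbabilityMeasure μ] [IsProbabilityMeasure ν]

lemma aemeasurable_quantileOf_prodMk :
    AEMeasurable (fun u => (quantileOf μ u, quantileOf ν u)) (volume.restrict (Ioo (0 : ℝ) 1)) :=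
  (aemeasurable_quantileOf μ).prodMk (aemeasurable_quantileOf ν)

lemma fst_quantileCoupling : (quantileCoupling μ ν).fst = μ :=
  (Measure.fst_map_prodMk₀ (aemeasurable_quantileOf ν)).trans (map_quantileOf μ)

lemma snd_quantileCoupling : (quantileCoupling μ ν).snd = ν :=
  (Measure.snd_map_prodMk₀ (aemeasurable_quantileOf μ)).trans (map_quantileOf ν)

instance : IsProbabilityMeasure (quantileCoupling μ ν) where
  measure_univ := by rw [← Measure.fst_univ, fst_quantileCoupling, measure_univ]

lemma map_swap_quantileCoupling :
    (quantileCoupling μ ν).map Prod.swap = quantileCoupling ν μ :=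
  AEMeasurable.map_map_of_aemeasurable measurable_swap.aemeasurable
    (aemeasurable_quantileOf_prodMk μ ν)

lemma lintegral_quantileCoupling {c : ℝ × ℝ → ℝ≥0∞} (hc : Measurable c) :
    ∫⁻ x, c x ∂quantileCoupling μ ν =
      ∫⁻ u in Ioo (0 : ℝ) 1, c (quantileOf μ u, quantileOf ν u) :=
  lintegral_map' hc.aemeasurable (aemeasurable_quantileOf_prodMk μ ν)

lemma quantileCoupling_Iic_prod_Ioi_le (s t : ℝ) :
    quantileCoupling μ ν (Iic s ×ˢ Ioi t) ≤ μ (Iic s) - ν (Iic t) := by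
  rw [quantileCoupling, Measure.map_apply_of_aemeasurable (aemeasurable_quantileOf_prodMk μ ν)
    (measurableSet_Iic.prod measurableSet_Ioi), Measure.restrict_apply' measurableSet_Ioo]
  calc volume ((fun u => (quantileOf μ u, quantileOf ν u)) ⁻¹' Iic s ×ˢ Ioi t ∩ Ioo 0 1)
      ≤ volume (Ioc (cdfOf ν t) (cdfOf μ s)) := by
        refine measure_mono fun u ⟨⟨hs, ht⟩, hu⟩ => ⟨?_, (quantileOf_le_iff μ hu s).1 hs⟩
        exact lt_of_not_ge fun h => ht.not_ge ((quantileOf_le_iff ν hu t).2 h)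
    _ = μ (Iic s) - ν (Iic t) := by
        rw [Real.volume_Ioc, ENNReal.ofReal_sub _ (cdfOf_nonneg ν t), ofReal_cdfOf, ofReal_cdfOf]

end QuantileCoupling

section QuadrantCost

lemma fst_sub_snd_le_measure_prod_compl {α β : Type*} [MeasurableSpace α] [MeasurableSpace β]
    (γ : Measure (α × β)) {A : Set α} {B : Set β} (hA : MeasurableSet A) (hB : MeasurableSet B) :
    γ.fst A - γ.snd B ≤ γ (A ×ˢ Bᶜ) := by
  rw [Measure.fst_apply hA, Measure.snd_apply hB, tsub_le_iff_right]
  refine (measure_mono fun z hz => ?_).trans (measure_union_le _ _)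
  by_cases h : z.2 ∈ B
  · exact Or.inr h
  · exact Or.inl ⟨hz, h⟩

lemma lintegral_measure_Ici_prod_Iio {α β : Type*}
    [TopologicalSpace α] [LinearOrder α] [OrderClosedTopology α] [SecondCountableTopology α]
    [MeasurableSpace α] [OpensMeasurableSpace α]
    [TopologicalSpace β] [LinearOrder β] [OrderClosedTopology β] [SecondCountableTopology β]
    [MeasurableSpace β] [OpensMeasurableSpace β]
    (γ Q : Measure (α × β)) [SFinite γ] [SFinite Q] :
    ∫⁻ x, Q (Ici x.1 ×ˢ Iio x.2) ∂γ = ∫⁻ z, γ (Iic z.1 ×ˢ Ioi z.2) ∂Q := by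
  have hle : MeasurableSet {w : (α × β) × (α × β) | w.1.1 ≤ w.2.1} :=
    measurableSet_le (by fun_prop) (by fun_prop)
  have hlt : MeasurableSet {w : (α × β) × (α × β) | w.2.2 < w.1.2} :=
    measurableSet_lt (by fun_prop) (by fun_prop)
  exact (Measure.prod_apply (hle.inter hlt)).symm.trans (Measure.prod_apply_symm (hle.inter hlt))

lemma lintegral_measure_Ici_prod_Iio_quantileCoupling_le (γ Q : Measure (ℝ × ℝ))
    [IsProbabilityMeasure γ] [SFinite Q] :
    ∫⁻ x, Q (Ici x.1 ×ˢ Iio x.2) ∂quantileCoupling γ.fst γ.snd ≤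
      ∫⁻ x, Q (Ici x.1 ×ˢ Iio x.2) ∂γ := by
  rw [lintegral_measure_Ici_prod_Iio, lintegral_measure_Ici_prod_Iio]
  refine lintegral_mono fun ⟨s, t⟩ => ?_
  calc quantileCoupling γ.fst γ.snd (Iic s ×ˢ Ioi t)
      ≤ γ.fst (Iic s) - γ.snd (Iic t) := quantileCoupling_Iic_prod_Ioi_le _ _ s t
    _ ≤ γ (Iic s ×ˢ (Iic t)ᶜ) :=
        fst_sub_snd_le_measure_prod_compl γ measurableSet_Iic measurableSet_Iic
    _ = γ (Iic s ×ˢ Ioi t) := by rw [compl_Iic]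

end QuadrantCost

section PowerCost

/-- The image of `m ⊗ volume` under `(a, t) ↦ (t - a, t)`. It represents translation-invariant costs
through their second derivative `m`: the function `c x y = diagonalShear m (Ici x ×ˢ Iio y)` depends
only on `y - x`, and its derivative in that variable is the distribution function of `m`. -/
noncomputable def diagonalShear (m : Measure ℝ) : Measure (ℝ × ℝ) :=
  (m.prod volume).map fun z => (z.2 - z.1, z.2)

instance (m : Measure ℝ) [SFinite m] : SFinite (diagonalShear m) := by
  unfold diagonalShear
  infer_instance

lemma diagonalShear_Ici_prod_Iio (m : Measure ℝ) [SFinite m] (x y : ℝ) :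
    diagonalShear m (Ici x ×ˢ Iio y) = ∫⁻ r in Iio (y - x), m (Iic r) := by
  have hshear : Measurable fun z : ℝ × ℝ => (z.2 - z.1, z.2) := by fun_prop
  have hquadrant : MeasurableSet (Ici x ×ˢ Iio y) := measurableSet_Ici.prod measurableSet_Iio
  have hslice (t : ℝ) : m ((fun a => (a, t)) ⁻¹' ((fun z : ℝ × ℝ => (z.2 - z.1, z.2)) ⁻¹'
      (Ici x ×ˢ Iio y))) = (Iio (y - x)).indicator (fun r => m (Iic r)) (t - x) := by
    by_cases ht : t < y
    · rw [indicator_of_mem (by simpa using ht)]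
      congr 1
      ext a
      simp [ht, le_sub_comm]
    · rw [indicator_of_notMem (by simpa using ht)]
      simp [preimage, ht]
  rw [diagonalShear, Measure.map_apply hshear hquadrant,
    Measure.prod_apply_symm (hshear hquadrant), lintegral_congr hslice,
    lintegral_sub_right_eq_self, lintegral_indicator measurableSet_Iio]

lemma monotone_indicator_Ici {f : ℝ → ℝ} {a : ℝ} (hf : MonotoneOn f (Ici a)) (ha : 0 ≤ f a) :
    Monotone ((Ici a).indicator f) := by
  intro r s hrs
  by_cases hr : r ∈ Ici a
  · have hs : s ∈ Ici a := le_trans hr hrs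
    simpa only [indicator_of_mem, hr, hs] using hf hr hs hrs
  · rw [indicator_of_notMem hr]
    exact indicator_nonneg (fun t ht => ha.trans (hf self_mem_Ici ht ht)) s

lemma continuousWithinAt_indicator_Ici {f : ℝ → ℝ} {a : ℝ} (hf : ContinuousOn f (Ici a)) (r : ℝ) :
    ContinuousWithinAt ((Ici a).indicator f) (Ici r) r := by
  rcases lt_or_ge r a with hr | hr
  · have hzero : (Ici a).indicator f =ᶠ[nhds r] fun _ => 0 :=
      (eventually_lt_nhds hr).mono fun t ht => indicator_of_notMem (notMem_Ici.2 ht) f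
    exact (continuousAt_const.congr hzero.symm).continuousWithinAt
  · exact ((hf r hr).mono (Ici_subset_Ici.2 hr)).congr
      (fun t ht => indicator_of_mem (Ici_subset_Ici.2 hr ht) f) (indicator_of_mem hr f)

/-- The right derivative of `h ↦ (max h 0) ^ p`, as a Stieltjes function. For `p = 1` it is the
indicator of `[0, ∞)`, thanks to the convention `0 ^ 0 = 1`. -/
noncomputable def powerDerivStieltjes {p : ℝ} (hp : 1 ≤ p) : StieltjesFunction ℝ where
  toFun := (Ici 0).indicator fun r => p * r ^ (p - 1)
  mono' := monotone_indicator_Ici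
    (fun r hr s _ hrs => mul_le_mul_of_nonneg_left
      (Real.rpow_le_rpow hr hrs (by linarith)) (by linarith))
    (mul_nonneg (by linarith) (Real.rpow_nonneg le_rfl _))
  right_continuous' := continuousWithinAt_indicator_Ici
    (continuous_const.mul (Real.continuous_rpow_const (by linarith))).continuousOn

variable {p : ℝ}

lemma powerDerivStieltjes_apply (hp : 1 ≤ p) (r : ℝ) :
    powerDerivStieltjes hp r = (Ici 0).indicator (fun r => p * r ^ (p - 1)) r := rfl

lemma powerDerivStieltjes_measure_Iic (hp : 1 ≤ p) (r : ℝ) :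
    (powerDerivStieltjes hp).measure (Iic r) =
      (Ici 0).indicator (fun r => ENNReal.ofReal (p * r ^ (p - 1))) r := by
  have hlim : Tendsto (powerDerivStieltjes hp) atBot (nhds 0) :=
    tendsto_const_nhds.congr' <| (eventually_lt_atBot 0).mono fun a ha => by
      rw [powerDerivStieltjes_apply, indicator_of_notMem (notMem_Ici.2 ha)]
  rw [StieltjesFunction.measure_Iic _ hlim, sub_zero, powerDerivStieltjes_apply]
  exact (congrFun (indicator_comp_of_zero ENNReal.ofReal_zero) r).symm

lemma lintegral_ofReal_mul_rpow_Ico (hp : 1 ≤ p) (h : ℝ) :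
    ∫⁻ r in Ico 0 h, ENNReal.ofReal (p * r ^ (p - 1)) = ENNReal.ofReal (max h 0 ^ p) := by
  rcases le_or_gt h 0 with hh | hh
  · simp [hh, Real.zero_rpow (by linarith : p ≠ 0)]
  have hint : IntervalIntegrable (fun r : ℝ => p * r ^ (p - 1)) volume 0 h :=
    (intervalIntegral.intervalIntegrable_rpow' (by linarith)).const_mul p
  have hval : ∫ r in (0 : ℝ)..h, p * r ^ (p - 1) = h ^ p := by
    rw [intervalIntegral.integral_const_mul, integral_rpow (Or.inl (by linarith)), sub_add_cancel,
      Real.zero_rpow (by linarith), sub_zero, mul_div_cancel₀ _ (by linarith)]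
  rw [max_eq_left hh.le, ← hval, intervalIntegral.integral_of_le hh.le,
    ofReal_integral_eq_lintegral_ofReal
      ((intervalIntegrable_iff_integrableOn_Ioc_of_le hh.le).1 hint)
      (ae_restrict_of_forall_mem measurableSet_Ioc fun r hr =>
        mul_nonneg (by linarith) (Real.rpow_nonneg hr.1.le _)),
    restrict_Ico_eq_restrict_Ioc]

lemma diagonalShear_powerDerivStieltjes (hp : 1 ≤ p) (x y : ℝ) :
    diagonalShear (powerDerivStieltjes hp).measure (Ici x ×ˢ Iio y) =
      ENNReal.ofReal (max (y - x) 0 ^ p) := by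
  simp_rw [diagonalShear_Ici_prod_Iio, powerDerivStieltjes_measure_Iic]
  rw [setLIntegral_indicator measurableSet_Ici, Ici_inter_Iio, lintegral_ofReal_mul_rpow_Ico hp]

lemma ofReal_abs_sub_rpow (hp : p ≠ 0) (x y : ℝ) :
    ENNReal.ofReal (|x - y| ^ p) =
      ENNReal.ofReal (max (y - x) 0 ^ p) + ENNReal.ofReal (max (x - y) 0 ^ p) := by
  rcases le_total x y with h | h
  · simp [abs_sub_comm x y, abs_of_nonneg, h, Real.zero_rpow hp]
  · simp [abs_of_nonneg, h, Real.zero_rpow hp]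

lemma lintegral_max_sub_rpow_quantileCoupling_le (hp : 1 ≤ p) (γ : Measure (ℝ × ℝ))
    [IsProbabilityMeasure γ] :
    ∫⁻ x, ENNReal.ofReal (max (x.2 - x.1) 0 ^ p) ∂quantileCoupling γ.fst γ.snd ≤
      ∫⁻ x, ENNReal.ofReal (max (x.2 - x.1) 0 ^ p) ∂γ := by
  simp_rw [← diagonalShear_powerDerivStieltjes hp]
  exact lintegral_measure_Ici_prod_Iio_quantileCoupling_le γ _

lemma lintegral_abs_sub_rpow_quantileCoupling_le (hp : 1 ≤ p) (γ : Measure (ℝ × ℝ))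
    [IsProbabilityMeasure γ] :
    ∫⁻ x, ENNReal.ofReal (|x.1 - x.2| ^ p) ∂quantileCoupling γ.fst γ.snd ≤
      ∫⁻ x, ENNReal.ofReal (|x.1 - x.2| ^ p) ∂γ := by
  have hswap : ∫⁻ x, ENNReal.ofReal (max (x.1 - x.2) 0 ^ p) ∂quantileCoupling γ.fst γ.snd ≤
      ∫⁻ x, ENNReal.ofReal (max (x.1 - x.2) 0 ^ p) ∂γ := by
    have : IsProbabilityMeasure (γ.map Prod.swap) :=
      Measure.isProbabilityMeasure_map measurable_swap.aemeasurable
    have h := lintegral_max_sub_rpow_quantileCoupling_le hp (γ.map Prod.swap)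
    rwa [Measure.fst_map_swap, Measure.snd_map_swap, ← map_swap_quantileCoupling,
      lintegral_map (by fun_prop) measurable_swap,
      lintegral_map (by fun_prop) measurable_swap] at h
  simp_rw [ofReal_abs_sub_rpow (by linarith : p ≠ 0)]
  rw [lintegral_add_left (by fun_prop), lintegral_add_left (by fun_prop)]
  exact add_le_add (lintegral_max_sub_rpow_quantileCoupling_le hp γ) hswap

end PowerCost

theorem wasserstein_pow_eq_integral_quantile_general {p : ℝ} (hp : 1 ≤ p) (μ ν : Measure ℝ)
    [IsProbabilityMeasure μ] [IsProbabilityMeasure ν] :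
    wassersteinDist p μ ν ^ p =
      ∫⁻ t in Ioo (0 : ℝ) 1, ENNReal.ofReal (|quantileOf μ t - quantileOf ν t| ^ p) := by
  rw [wassersteinDist, ← ENNReal.rpow_mul, one_div_mul_cancel (by linarith), ENNReal.rpow_one,
    ← lintegral_quantileCoupling μ ν (c := fun x => ENNReal.ofReal (|x.1 - x.2| ^ p))
      (by fun_prop)]
  refine le_antisymm ?_ (le_iInf₂ fun γ hγ => le_iInf₂ fun hfst hsnd => ?_)
  · exact iInf₂_le_of_le (quantileCoupling μ ν) inferInstance <|
      iInf₂_le (fst_quantileCoupling μ ν) (snd_quantileCoupling μ ν)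
  · subst hfst hsnd
    exact lintegral_abs_sub_rpow_quantileCoupling_le hp γ

/-- For probability measures `μ, ν` on `ℝ` with finite `p`-th moments (`p ≥ 1`),
`W_p(μ, ν)^p = ∫₀¹ |F⁻¹(t) - G⁻¹(t)|^p dt` where `F⁻¹, G⁻¹` are the quantile functions. -/
theorem wasserstein_pow_eq_integral_quantile
    (p : ℝ) (hp : 1 ≤ p) (μ ν : Measure ℝ)
    (hμ : IsProbabilityMeasure μ) (hν : IsProbabilityMeasure ν)
    (hmomμ : ∫⁻ x, ENNReal.ofReal (|x| ^ p) ∂μ < ⊤)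
    (hmomν : ∫⁻ x, ENNReal.ofReal (|x| ^ p) ∂ν < ⊤) :
    wassersteinDist p μ ν ^ p =
      ∫⁻ t in Set.Ioo (0 : ℝ) 1,
        ENNReal.ofReal (|quantileOf μ t - quantileOf ν t| ^ p) :=
  wasserstein_pow_eq_integral_quantile_general hp μ ν
end

section
/- Let μ_prior ∈ ℝ, σ_prior > 0, σ > 0 and n ≥ 1 a natural number. For ȳ ∈ ℝ define μ_post(ȳ) = (μ_prior/σ_prior² + n·ȳ/σ²)/(1/σ_prior² + n/σ²) and σ_post² = 1/(1/σ_prior² + n/σ²). Then the expectation of (μ_prior − μ_post(ȳ))² + (σ_prior − σ_post)² when ȳ is distributed according to the prior predictive distribution N(μ_prior, σ_prior² + σ²/n) equals σ_prior²/(σ²/(n·σ_prior²) + 1) + σ_prior²·(1 − (1 + n·σ_prior²/σ²)^(−1/2))². -/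
open MeasureTheory ProbabilityTheory
open scoped ENNReal NNReal

/-!
The posterior mean is an affine function of the sample mean `Y`, with slope the weight `w` given to
the data, and it fixes the prior mean. Under the prior predictive distribution it therefore has the
prior mean as its expectation, and its expected squared distance from the prior mean is its variance
`w² Var[Y]`. The posterior standard deviation does not depend on the data, so its contribution is
constant. Only the first two moments of `Y` enter.
-/

/-- The mean of the posterior of a normal mean, for prior `N(μ, s²)`, noise standard deviation `t`
and sample mean `y` of `m` observations. The sample size is real, which allows effective sample
sizes. -/
noncomputable def posteriorMean (μ s t m y : ℝ) : ℝ :=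
  (μ / s ^ 2 + m * y / t ^ 2) / (1 / s ^ 2 + m / t ^ 2)

/-- The standard deviation of the posterior of a normal mean, for prior standard deviation `s`,
noise standard deviation `t` and `m` observations. -/
noncomputable def posteriorSD (s t m : ℝ) : ℝ :=
  √(1 / (1 / s ^ 2 + m / t ^ 2))

/-- The weight of the sample mean in the posterior mean, the prior mean having the complementary
weight. -/
noncomputable def dataWeight (s t m : ℝ) : ℝ :=
  m * s ^ 2 / (t ^ 2 + m * s ^ 2)

lemma posteriorMean_eq_add_dataWeight_mul {s t m : ℝ} (hs : s ≠ 0) (ht : t ≠ 0) (hm : 0 ≤ m)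
    (μ y : ℝ) : posteriorMean μ s t m y = μ + dataWeight s t m * (y - μ) := by
  unfold posteriorMean dataWeight
  field_simp
  ring

lemma posteriorSD_eq_mul_rpow {s t m : ℝ} (hs : 0 < s) (ht : t ≠ 0) (hm : 0 ≤ m) :
    posteriorSD s t m = s * (1 + m * s ^ 2 / t ^ 2) ^ (-(1 / 2) : ℝ) := by
  have hvar : 1 / (1 / s ^ 2 + m / t ^ 2) = s ^ 2 * (1 + m * s ^ 2 / t ^ 2)⁻¹ := by
    field_simp
  rw [posteriorSD, hvar, Real.sqrt_mul (sq_nonneg s), Real.sqrt_sq hs.le, Real.sqrt_inv,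
    Real.rpow_neg (by positivity), Real.sqrt_eq_rpow]

lemma dataWeight_sq_mul_predictive_variance {s t m : ℝ} (hs : s ≠ 0) (ht : t ≠ 0) (hm : 0 < m) :
    dataWeight s t m ^ 2 * (s ^ 2 + t ^ 2 / m) = s ^ 2 / (t ^ 2 / (m * s ^ 2) + 1) := by
  unfold dataWeight
  field_simp
  ring

section Moments

variable {Ω : Type*} [MeasurableSpace Ω] {P : Measure Ω} {Y : Ω → ℝ} {μ s t m : ℝ}

lemma memLp_posteriorMean [IsFiniteMeasure P] (hY : MemLp Y 2 P) (μ s t m : ℝ) :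
    MemLp (fun ω ↦ posteriorMean μ s t m (Y ω)) 2 P := by
  have hdata : MemLp (fun ω ↦ (t ^ 2)⁻¹ * (m * Y ω)) 2 P := (hY.const_mul m).const_mul _
  have hnum : MemLp (fun ω ↦ (s ^ 2)⁻¹ * μ + (t ^ 2)⁻¹ * (m * Y ω)) 2 P :=
    (memLp_const ((s ^ 2)⁻¹ * μ)).add hdata
  simpa only [posteriorMean, div_eq_inv_mul] using
    hnum.const_mul ((s ^ 2)⁻¹ * 1 + (t ^ 2)⁻¹ * m)⁻¹

variable [IsProbabilityMeasure P]

lemma integral_sq_integral_sub_add_const {X : Ω → ℝ} (hX : MemLp X 2 P) (c : ℝ) :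
    ∫ ω, ((P[X] - X ω) ^ 2 + c) ∂P = Var[X; P] + c := by
  have hint : Integrable (fun ω ↦ (X ω - P[X]) ^ 2) P := (hX.sub (memLp_const _)).integrable_sq
  simp_rw [sub_sq_comm P[X]]
  rw [integral_add hint (integrable_const c), ← variance_eq_integral hX.aemeasurable,
    integral_const, probReal_univ, one_smul]

lemma integral_posteriorMean (hY : Integrable Y P) (hmean : P[Y] = μ) (hs : s ≠ 0) (ht : t ≠ 0)
    (hm : 0 ≤ m) : ∫ ω, posteriorMean μ s t m (Y ω) ∂P = μ := by
  have hsub : Integrable (fun ω ↦ Y ω - μ) P := hY.sub (integrable_const μ)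
  simp_rw [posteriorMean_eq_add_dataWeight_mul hs ht hm]
  rw [integral_add (integrable_const μ) (hsub.const_mul _), integral_const_mul,
    integral_sub hY (integrable_const μ), hmean]
  simp

lemma variance_posteriorMean (hY : AEStronglyMeasurable Y P) (hs : s ≠ 0) (ht : t ≠ 0)
    (hm : 0 ≤ m) :
    Var[fun ω ↦ posteriorMean μ s t m (Y ω); P] = dataWeight s t m ^ 2 * Var[Y; P] := by
  have hsub : AEStronglyMeasurable (fun ω ↦ Y ω - μ) P := hY.sub aestronglyMeasurable_const
  simp_rw [posteriorMean_eq_add_dataWeight_mul hs ht hm]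
  rw [variance_const_add (hsub.const_mul _), variance_const_mul, variance_sub_const hY]

theorem expected_squared_wasserstein_learning_general (hY : MemLp Y 2 P) (hmean : P[Y] = μ)
    (hvar : Var[Y; P] = s ^ 2 + t ^ 2 / m) (hs : 0 < s) (ht : t ≠ 0) (hm : 0 < m) :
    ∫ ω, ((μ - posteriorMean μ s t m (Y ω)) ^ 2 + (s - posteriorSD s t m) ^ 2) ∂P
      = s ^ 2 / (t ^ 2 / (m * s ^ 2) + 1)
        + s ^ 2 * (1 - (1 + m * s ^ 2 / t ^ 2) ^ (-(1 / 2) : ℝ)) ^ 2 := by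
  have hexp : ∫ ω, posteriorMean μ s t m (Y ω) ∂P = μ :=
    integral_posteriorMean (hY.integrable one_le_two) hmean hs.ne' ht hm.le
  calc
    _ = Var[fun ω ↦ posteriorMean μ s t m (Y ω); P] + (s - posteriorSD s t m) ^ 2 := by
      simpa only [hexp] using integral_sq_integral_sub_add_const (memLp_posteriorMean hY μ s t m)
        ((s - posteriorSD s t m) ^ 2)
    _ = s ^ 2 / (t ^ 2 / (m * s ^ 2) + 1) + (s - posteriorSD s t m) ^ 2 := by
      rw [variance_posteriorMean hY.aestronglyMeasurable hs.ne' ht hm.le, hvar,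
        dataWeight_sq_mul_predictive_variance hs.ne' ht hm]
    _ = _ := by
      rw [posteriorSD_eq_mul_rpow hs ht hm.le]
      ring

end Moments

/-- The expected squared Wasserstein-2 learning metric between a Gaussian prior and the
Gaussian posterior after `n` normal observations, averaged over the prior predictive
distribution `N(μ_prior, σ_prior² + σ²/n)` of the sample mean `ȳ`:
`E[(μ_prior - μ_post(ȳ))² + (σ_prior - σ_post)²]
  = σ_prior²/(σ²/(n σ_prior²) + 1) + σ_prior² (1 - (1 + n σ_prior²/σ²)^(-1/2))²`. -/
theorem expected_squared_wasserstein_learning (μprior σprior σ : ℝ)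
    (hσprior : 0 < σprior) (hσ : 0 < σ) (n : ℕ) (hn : 1 ≤ n) :
    ∫ ybar,
        ((μprior - (μprior / σprior ^ 2 + n * ybar / σ ^ 2)
            / (1 / σprior ^ 2 + n / σ ^ 2)) ^ 2
          + (σprior - Real.sqrt (1 / (1 / σprior ^ 2 + n / σ ^ 2))) ^ 2)
        ∂(gaussianReal μprior (σprior ^ 2 + σ ^ 2 / n).toNNReal)
      = σprior ^ 2 / (σ ^ 2 / (n * σprior ^ 2) + 1)
        + σprior ^ 2 * (1 - (1 + n * σprior ^ 2 / σ ^ 2) ^ (-(1 / 2) : ℝ)) ^ 2 := by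
  exact expected_squared_wasserstein_learning_general (memLp_id_gaussianReal 2)
    integral_id_gaussianReal (variance_id_gaussianReal.trans (Real.coe_toNNReal _ (by positivity)))
    hσprior hσ.ne' (Nat.cast_pos.2 hn)
end

section
/- Let μ_prior ∈ ℝ, σ_prior > 0, σ > 0 and n ≥ 1. With μ_post(ȳ) = (μ_prior/σ_prior² + n·ȳ/σ²)/(1/σ_prior² + n/σ²) and σ_post² = 1/(1/σ_prior² + n/σ²), the expected Wasserstein-2 learning, E over ȳ ~ N(μ_prior, σ_prior² + σ²/n) of W_2(N(μ_prior, σ_prior²), N(μ_post(ȳ), σ_post²)), is at most sqrt( σ_prior²/(σ²/(n·σ_prior²) + 1) + σ_prior²·(1 − (1 + n·σ_prior²/σ²)^(−1/2))² ). -/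
/-!
Driving both Gaussians by the same standard normal variable bounds `W₂(N(m, v), N(m', v'))` by
`√((m - m')² + (√v - √v')²)`. In the conjugate normal model the posterior variance does not depend
on the data, so averaging over `ȳ` only affects the term `(m - m')²`, and Jensen's inequality moves
the average inside the square root. With `w = τ / (τ + σ²/n)`, where `τ` is the prior variance, the
posterior mean is `μ + w (ȳ - μ)` and the posterior variance is `τ (1 - w)`. Since `ȳ` has variance
`τ / w`, the posterior mean has variance `w² · τ / w = τ w`.
-/

open MeasureTheory ProbabilityTheory Filter
open scoped ENNReal NNReal

section WassersteinDist

variable {Ω : Type*} {mΩ : MeasurableSpace Ω} {P : Measure Ω} [IsProbabilityMeasure P]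

lemma wassersteinDist_le_of_hasLaw {p : ℝ} (hp : 0 ≤ p) {μ ν : Measure ℝ} {X Y : Ω → ℝ}
    (hX : HasLaw X μ P) (hY : HasLaw Y ν P) :
    wassersteinDist p μ ν ≤ (∫⁻ ω, ENNReal.ofReal (|X ω - Y ω| ^ p) ∂P) ^ (1 / p) := by
  have hXY : AEMeasurable (fun ω ↦ (X ω, Y ω)) P := hX.aemeasurable.prodMk hY.aemeasurable
  have hfst : (P.map fun ω ↦ (X ω, Y ω)).map Prod.fst = μ := by
    rw [AEMeasurable.map_map_of_aemeasurable (by fun_prop) hXY]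
    exact hX.map_eq
  have hsnd : (P.map fun ω ↦ (X ω, Y ω)).map Prod.snd = ν := by
    rw [AEMeasurable.map_map_of_aemeasurable (by fun_prop) hXY]
    exact hY.map_eq
  have hcost : ∫⁻ x, ENNReal.ofReal (|x.1 - x.2| ^ p) ∂(P.map fun ω ↦ (X ω, Y ω))
      = ∫⁻ ω, ENNReal.ofReal (|X ω - Y ω| ^ p) ∂P := lintegral_map' (by fun_prop) hXY
  rw [wassersteinDist, ← hcost]
  refine ENNReal.rpow_le_rpow ?_ (by positivity)
  exact iInf₂_le_of_le _ (Measure.isProbabilityMeasure_map hXY) (iInf₂_le hfst hsnd)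

lemma wassersteinDist_two_le_of_hasLaw {μ ν : Measure ℝ} {X Y : Ω → ℝ}
    (hX : HasLaw X μ P) (hY : HasLaw Y ν P) (hXY : MemLp (fun ω ↦ X ω - Y ω) 2 P) :
    wassersteinDist 2 μ ν ≤ ENNReal.ofReal √(∫ ω, (X ω - Y ω) ^ 2 ∂P) := by
  refine (wassersteinDist_le_of_hasLaw zero_le_two hX hY).trans_eq ?_
  simp_rw [Real.rpow_two, sq_abs]
  rw [← ofReal_integral_eq_lintegral_ofReal hXY.integrable_sq (ae_of_all _ fun _ ↦ sq_nonneg _),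
    ENNReal.ofReal_rpow_of_nonneg (by positivity) (by norm_num), Real.sqrt_eq_rpow]

lemma integral_const_add_const_mul_sq {Z : Ω → ℝ} (hZ : MemLp Z 2 P) (hmean : P[Z] = 0)
    (hvar : Var[Z; P] = 1) (a b : ℝ) : ∫ ω, (a + b * Z ω) ^ 2 ∂P = a ^ 2 + b ^ 2 := by
  have hbZ : MemLp (fun ω ↦ b * Z ω) 2 P := hZ.const_mul b
  have hmean_affine : ∫ ω, (a + b * Z ω) ∂P = a := by
    rw [integral_add (integrable_const a) (hbZ.integrable one_le_two), integral_const_mul, hmean]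
    simp
  have hvar_affine : Var[fun ω ↦ a + b * Z ω; P] = b ^ 2 := by
    rw [variance_const_add hbZ.aestronglyMeasurable, variance_const_mul, hvar, mul_one]
  have hsub := variance_eq_sub ((memLp_const a).add hbZ)
  simp only [Pi.add_def, Pi.pow_apply] at hsub
  rw [hvar_affine, hmean_affine] at hsub
  linarith

lemma wassersteinDist_two_map_const_add_const_mul_le {Z : Ω → ℝ} (hZ : MemLp Z 2 P)
    (hmean : P[Z] = 0) (hvar : Var[Z; P] = 1) (m m' s s' : ℝ) :
    wassersteinDist 2 (P.map fun ω ↦ m + s * Z ω) (P.map fun ω ↦ m' + s' * Z ω)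
      ≤ ENNReal.ofReal √((m - m') ^ 2 + (s - s') ^ 2) := by
  have hlaw (a b : ℝ) : HasLaw (fun ω ↦ a + b * Z ω) (P.map fun ω ↦ a + b * Z ω) P :=
    ⟨(hZ.aemeasurable.const_mul b).const_add a, rfl⟩
  have hLp (a b : ℝ) : MemLp (fun ω ↦ a + b * Z ω) 2 P := (memLp_const a).add (hZ.const_mul b)
  have hdiff (ω : Ω) : m + s * Z ω - (m' + s' * Z ω) = m - m' + (s - s') * Z ω := by ring
  refine (wassersteinDist_two_le_of_hasLaw (hlaw m s) (hlaw m' s')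
    ((hLp m s).sub (hLp m' s'))).trans_eq ?_
  simp_rw [hdiff, integral_const_add_const_mul_sq hZ hmean hvar]

end WassersteinDist

section Sqrt

variable {Ω : Type*} {mΩ : MeasurableSpace Ω} {P : Measure Ω} {f : Ω → ℝ}

lemma memLp_two_sqrt (hf : Integrable f P) : MemLp (fun ω ↦ √(f ω)) 2 P := by
  rw [memLp_two_iff_integrable_sq hf.aemeasurable.sqrt.aestronglyMeasurable]
  simpa only [Real.sq_sqrt'] using hf.pos_part

lemma integral_sqrt_le_sqrt_integral [IsProbabilityMeasure P] (hf : Integrable f P)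
    (hf_nonneg : 0 ≤ᵐ[P] f) : ∫ ω, √(f ω) ∂P ≤ √(∫ ω, f ω ∂P) :=
  Real.strictConcaveOn_sqrt.concaveOn.le_map_integral Real.continuous_sqrt.continuousOn isClosed_Ici
    hf_nonneg hf ((memLp_two_sqrt hf).integrable one_le_two)

end Sqrt

section GaussianReal

lemma gaussianReal_zero_one_map_const_add_const_mul (m s : ℝ) :
    (gaussianReal 0 1).map (fun z ↦ m + s * z) = gaussianReal m (s ^ 2).toNNReal := by
  refine (gaussianReal_const_add (gaussianReal_const_mul .id s) m).map_eq.trans ?_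
  congr 1
  · simp
  · ext
    simp [sq_nonneg]

lemma wassersteinDist_two_gaussianReal_le (m m' : ℝ) (v v' : ℝ≥0) :
    wassersteinDist 2 (gaussianReal m v) (gaussianReal m' v')
      ≤ ENNReal.ofReal √((m - m') ^ 2 + (√v - √v') ^ 2) := by
  simpa [gaussianReal_zero_one_map_const_add_const_mul] using
    wassersteinDist_two_map_const_add_const_mul_le (memLp_id_gaussianReal 2)
      (integral_id_gaussianReal (μ := 0) (v := 1)) (by simp) m m' √v √v'

lemma integral_wassersteinDist_two_gaussianReal_le {Ω : Type*} {mΩ : MeasurableSpace Ω}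
    {P : Measure Ω} [IsProbabilityMeasure P] {M : Ω → ℝ} (hM : MemLp M 2 P) (m : ℝ) (v v' : ℝ≥0) :
    ∫ ω, (wassersteinDist 2 (gaussianReal m v) (gaussianReal (M ω) v')).toReal ∂P
      ≤ √(∫ ω, (m - M ω) ^ 2 ∂P + (√v - √v') ^ 2) := by
  have hsq : Integrable (fun ω ↦ (m - M ω) ^ 2) P := ((memLp_const m).sub hM).integrable_sq
  have hcost : Integrable (fun ω ↦ (m - M ω) ^ 2 + (√v - √v') ^ 2) P := hsq.add (integrable_const _)
  have hcost_nonneg : 0 ≤ᵐ[P] fun ω ↦ (m - M ω) ^ 2 + (√v - √v') ^ 2 :=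
    ae_of_all _ fun _ ↦ by positivity
  calc ∫ ω, (wassersteinDist 2 (gaussianReal m v) (gaussianReal (M ω) v')).toReal ∂P
      ≤ ∫ ω, √((m - M ω) ^ 2 + (√v - √v') ^ 2) ∂P :=
        integral_mono_of_nonneg (ae_of_all _ fun _ ↦ ENNReal.toReal_nonneg)
          ((memLp_two_sqrt hcost).integrable one_le_two)
          (ae_of_all _ fun ω ↦ ENNReal.toReal_le_of_le_ofReal (Real.sqrt_nonneg _)
            (wassersteinDist_two_gaussianReal_le m (M ω) v v'))
    _ ≤ √(∫ ω, ((m - M ω) ^ 2 + (√v - √v') ^ 2) ∂P) :=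
        integral_sqrt_le_sqrt_integral hcost hcost_nonneg
    _ = √(∫ ω, (m - M ω) ^ 2 ∂P + (√v - √v') ^ 2) := by
        rw [integral_add hsq (integrable_const _), integral_const, probReal_univ, one_smul]

lemma integral_sub_mean_sq_gaussianReal (m : ℝ) (v : ℝ≥0) :
    ∫ x, (x - m) ^ 2 ∂gaussianReal m v = v := by
  simpa using (variance_eq_integral (μ := gaussianReal m v) aemeasurable_id).symm

lemma integral_wassersteinDist_two_gaussianReal_shrinkage_le (m w : ℝ) (v v' V : ℝ≥0) :
    ∫ y, (wassersteinDist 2 (gaussianReal m v) (gaussianReal (m + w * (y - m)) v')).toReal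
        ∂gaussianReal m V
      ≤ √(w ^ 2 * V + (√v - √v') ^ 2) := by
  have hM : MemLp (fun y ↦ m + w * (y - m)) 2 (gaussianReal m V) :=
    (memLp_const m).add (((memLp_id_gaussianReal 2).sub (memLp_const m)).const_mul w)
  have hM_sq : ∫ y, (m - (m + w * (y - m))) ^ 2 ∂gaussianReal m V = w ^ 2 * V := by
    simp_rw [sub_add_cancel_left, neg_sq, mul_pow, integral_const_mul,
      integral_sub_mean_sq_gaussianReal]
  rw [← hM_sq]
  exact integral_wassersteinDist_two_gaussianReal_le hM m v v'

end GaussianReal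

/-- The weight given to the sample mean, of sampling variance `u`, in the posterior mean of a normal
model whose prior has variance `τ`. -/
noncomputable def shrinkageWeight (τ u : ℝ) : ℝ := τ / (τ + u)

namespace shrinkageWeight

variable {τ u e n : ℝ}

lemma le_one (hτ : 0 ≤ τ) (hu : 0 ≤ u) : shrinkageWeight τ u ≤ 1 :=
  div_le_one_of_le₀ (le_add_of_nonneg_right hu) (add_nonneg hτ hu)

lemma sq_mul_add (h : τ + u ≠ 0) : shrinkageWeight τ u ^ 2 * (τ + u) = τ * shrinkageWeight τ u := by
  rw [shrinkageWeight]
  field_simp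

lemma one_sub (h : τ + u ≠ 0) : 1 - shrinkageWeight τ u = u / (τ + u) := by
  rw [shrinkageWeight]
  field_simp
  ring

lemma posteriorMean_eq (hτ : 0 < τ) (he : 0 < e) (hn : 0 < n) (m y : ℝ) :
    (m / τ + n * y / e) / (1 / τ + n / e) = m + shrinkageWeight τ (e / n) * (y - m) := by
  rw [shrinkageWeight]
  field_simp
  ring

lemma posteriorVariance_eq (hτ : 0 < τ) (he : 0 < e) (hn : 0 < n) :
    1 / (1 / τ + n / e) = τ * (1 - shrinkageWeight τ (e / n)) := by
  rw [one_sub (by positivity)]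
  field_simp
  ring

lemma div_div_add_one_eq (hτ : 0 < τ) (he : 0 < e) (hn : 0 < n) :
    τ / (e / (n * τ) + 1) = τ * shrinkageWeight τ (e / n) := by
  rw [shrinkageWeight]
  field_simp
  ring

lemma sqrt_one_sub (hτ : 0 < τ) (he : 0 < e) (hn : 0 < n) :
    √(1 - shrinkageWeight τ (e / n)) = (1 + n * τ / e) ^ (-(1 / 2) : ℝ) := by
  have hinv : 1 - shrinkageWeight τ (e / n) = (1 + n * τ / e)⁻¹ := by
    rw [one_sub (by positivity)]
    field_simp
    ring
  rw [hinv, Real.sqrt_inv, Real.rpow_neg (by positivity), Real.sqrt_eq_rpow]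

end shrinkageWeight

/-- The expected Wasserstein-2 learning, averaging
`W₂(N(μ_prior, σ_prior²), N(μ_post(ȳ), σ_post²))` over the prior predictive distribution
`ȳ ~ N(μ_prior, σ_prior² + σ²/n)`, is bounded by
`sqrt(σ_prior²/(σ²/(n σ_prior²) + 1) + σ_prior² (1 - (1 + n σ_prior²/σ²)^(-1/2))²)`. -/
theorem expected_wasserstein_learning_le (μprior σprior σ : ℝ)
    (hσprior : 0 < σprior) (hσ : 0 < σ) (n : ℕ) (hn : 1 ≤ n) :
    ∫ ybar,
        (wassersteinDist 2 (gaussianReal μprior (σprior ^ 2).toNNReal)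
          (gaussianReal
            ((μprior / σprior ^ 2 + n * ybar / σ ^ 2) / (1 / σprior ^ 2 + n / σ ^ 2))
            (1 / (1 / σprior ^ 2 + n / σ ^ 2)).toNNReal)).toReal
        ∂(gaussianReal μprior (σprior ^ 2 + σ ^ 2 / n).toNNReal)
      ≤ Real.sqrt (σprior ^ 2 / (σ ^ 2 / (n * σprior ^ 2) + 1)
          + σprior ^ 2 * (1 - (1 + n * σprior ^ 2 / σ ^ 2) ^ (-(1 / 2) : ℝ)) ^ 2) := by
  have hn_pos : (0 : ℝ) < n := by exact_mod_cast hn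
  have hτ : 0 < σprior ^ 2 := by positivity
  have he : 0 < σ ^ 2 := by positivity
  simp_rw [shrinkageWeight.posteriorMean_eq hτ he hn_pos,
    shrinkageWeight.posteriorVariance_eq hτ he hn_pos,
    shrinkageWeight.div_div_add_one_eq hτ he hn_pos,
    ← shrinkageWeight.sqrt_one_sub hτ he hn_pos]
  set w := shrinkageWeight (σprior ^ 2) (σ ^ 2 / n) with hw
  have hw_compl : 0 ≤ 1 - w := sub_nonneg.2 (shrinkageWeight.le_one hτ.le (by positivity))
  have hmean : w ^ 2 * (σprior ^ 2 + σ ^ 2 / n).toNNReal = σprior ^ 2 * w := by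
    rw [Real.coe_toNNReal _ (by positivity), hw, shrinkageWeight.sq_mul_add (by positivity)]
  have hsd : (√(σprior ^ 2).toNNReal - √(σprior ^ 2 * (1 - w)).toNNReal) ^ 2
      = σprior ^ 2 * (1 - √(1 - w)) ^ 2 := by
    rw [Real.coe_toNNReal _ hτ.le, Real.coe_toNNReal _ (by positivity), Real.sqrt_mul hτ.le,
      Real.sqrt_sq hσprior.le]
    ring
  rw [← hmean, ← hsd]
  exact integral_wassersteinDist_two_gaussianReal_shrinkage_le μprior w _ _ _
end
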